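/- Let κ, φ, τ_1, τ_2, τ_3, c, d ∈ ℤ≥0 and ε ∈ {0,1}. Then Σ (−1)^{φ+α_1+α_3+ω+η_1+η_2+η_3} · 2^{τ_1+τ_2−α_1−η_1−η_2} · C(κ−α_1−τ_2−τ_3+ω−α_3−c, φ−κ+τ_1+τ_2+ω+d) · C(τ_3, ω) · C(τ_1, α_1) · C(ω, α_3) · C(τ_1−α_1, η_1) · C(τ_2, η_2) · C(ω−α_3, η_3) · (α_1−ω+α_3)^ε = (−1)^{φ+ε} · τ_1^ε · C(κ−τ_1−τ_2−c, φ−κ+τ_2+τ_3+d+ε), as an identity of integers, where the sum ranges over all ω ∈ {0,…,τ_3}, α_1 ∈ {0,…,τ_1}, α_3 ∈ {0,…,ω}, η_1 ∈ {0,…,τ_1−α_1}, η_2 ∈ {0,…,τ_2}, η_3 ∈ {0,…,ω−α_3}. -/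

import Mathlib

/-!
The sums over `η₁`, `η₂`, `η₃` separate from the rest. The first two are `(2 - 1) ^ (τ₁ - α₁)` and
`(2 - 1) ^ τ₂`, hence `1`; the third is `(1 - 1) ^ (ω - α₃)`, which forces `α₃ = ω`
(`eta_sum`, `alpha_three_sum`). What remains is
`∑ ω, ∑ α₁, (-1) ^ (φ + α₁) C(κ - α₁ - τ₂ - τ₃ - c, φ - κ + τ₁ + τ₂ + ω + d) C(τ₃, ω) C(τ₁, α₁) α₁ ^ ε`.
Iterating Pascal's rule evaluates the sum over `ω` (`sum_choose_mul_gchoose`, a form of Vandermonde's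
identity) and then the alternating sum over `α₁` (`sum_alternating_gchoose`). For `ε = 1` the factor
`α₁` is first absorbed by `α₁ C(τ₁, α₁) = τ₁ C(τ₁ - 1, α₁ - 1)`.
-/

/- The generalized binomial coefficient `C(a,b)` for `a, b ∈ ℤ`:
`C(a,b) = a(a−1)⋯(a−b+1)/b!` when `b ≥ 0`, and `0` when `b < 0`. -/
def gchoose (a b : ℤ) : ℚ :=
  if 0 ≤ b then (∏ i ∈ Finset.range b.toNat, ((a : ℚ) - (i : ℚ))) / (Nat.factorial b.toNat : ℚ)
  else 0


/-- Pascal's rule, valid for all integers `b`, including `b = -1`. -/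
lemma gchoose_pascal (a b : ℤ) :
    gchoose (a + 1) (b + 1) = gchoose a b + gchoose a (b + 1) := by
  rcases lt_trichotomy b (-1) with h | h | h
  · simp [gchoose, show ¬ (0 ≤ b + 1) by omega, show ¬ (0 ≤ b) by omega]
  · subst h
    simp [gchoose]
  · obtain ⟨n, rfl⟩ := Int.eq_ofNat_of_zero_le (show 0 ≤ b by omega)
    have e : ((n : ℤ) + 1).toNat = n + 1 := by omega
    simp only [gchoose, e, Int.toNat_natCast, show (0 : ℤ) ≤ (n : ℤ) + 1 by omega,
      show (0 : ℤ) ≤ (n : ℤ) by omega, if_true]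
    -- Both products over `n + 1` factors share the falling factorial `a (a - 1) ⋯ (a - n + 1)`.
    rw [Finset.prod_range_succ' (fun i : ℕ => (((a + 1 : ℤ) : ℚ) - (i : ℚ))),
      Finset.prod_range_succ (fun i : ℕ => ((a : ℚ) - (i : ℚ)))]
    have hp : ∏ i ∈ Finset.range n, (((a + 1 : ℤ) : ℚ) - ((i + 1 : ℕ) : ℚ)) =
        ∏ i ∈ Finset.range n, ((a : ℚ) - (i : ℚ)) :=
      Finset.prod_congr rfl fun i _ => by push_cast; ring
    rw [hp, Nat.factorial_succ]
    have h1 : (n.factorial : ℚ) ≠ 0 := by positivity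
    have h2 : ((n : ℚ) + 1) ≠ 0 := by positivity
    push_cast
    field_simp
    ring

lemma sum_choose_succ (n : ℕ) (f : ℕ → ℚ) :
    ∑ k ∈ Finset.range (n + 2), ((n + 1).choose k : ℚ) * f k =
      ∑ k ∈ Finset.range (n + 1), (n.choose k : ℚ) * (f k + f (k + 1)) := by
  rw [Finset.sum_choose_succ_mul (fun i _ => f i) n, ← Finset.sum_add_distrib]
  exact Finset.sum_congr rfl fun k _ => by ring

/-- Vandermonde's identity `∑ k, C(n, k) C(A, B + k) = C(A + n, B + n)`. -/
lemma sum_choose_mul_gchoose (n : ℕ) (A B : ℤ) :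
    ∑ k ∈ Finset.range (n + 1), (n.choose k : ℚ) * gchoose A (B + k) =
      gchoose (A + n) (B + n) := by
  induction n generalizing A B with
  | zero => simp
  | succ n ih =>
    rw [sum_choose_succ n fun k => gchoose A (B + k)]
    have h := ih (A + 1) (B + 1)
    rw [show A + ((n + 1 : ℕ) : ℤ) = A + 1 + n by push_cast; ring,
      show B + ((n + 1 : ℕ) : ℤ) = B + 1 + n by push_cast; ring, ← h]
    refine Finset.sum_congr rfl fun k _ => ?_
    have p := gchoose_pascal A (B + k)
    rw [show B + 1 + (k : ℤ) = B + k + 1 by ring, p]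
    push_cast
    rw [add_assoc B]

/-- The `n`-th backward difference of `C(·, B)` at `A` is `C(A - n, B - n)`. -/
lemma sum_alternating_gchoose (n : ℕ) (A B : ℤ) :
    ∑ k ∈ Finset.range (n + 1), (n.choose k : ℚ) * ((-1) ^ k * gchoose (A - k) B) =
      gchoose (A - n) (B - n) := by
  induction n generalizing A B with
  | zero => simp
  | succ n ih =>
    rw [sum_choose_succ n fun k => (-1) ^ k * gchoose (A - k) B]
    have h := ih (A - 1) (B - 1)
    rw [show A - ((n + 1 : ℕ) : ℤ) = A - 1 - n by push_cast; ring,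
      show B - ((n + 1 : ℕ) : ℤ) = B - 1 - n by push_cast; ring, ← h]
    refine Finset.sum_congr rfl fun k _ => ?_
    have p := gchoose_pascal (A - 1 - k) (B - 1)
    rw [show A - 1 - (k : ℤ) + 1 = A - k by ring, show B - 1 + 1 = B by ring] at p
    rw [show A - ((k + 1 : ℕ) : ℤ) = A - 1 - k by push_cast; ring, p]
    ring

/-- The difference formula weighted by `k ^ ε`, where `ε ∈ {0, 1}`. -/
lemma sum_alternating_gchoose_weighted (n ε : ℕ) (hε : ε ≤ 1) (A B : ℤ) :
    ∑ k ∈ Finset.range (n + 1), (n.choose k : ℚ) * ((-1) ^ k * gchoose (A - k) B) * (k : ℚ) ^ ε =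
      (-1) ^ ε * (n : ℚ) ^ ε * gchoose (A - n) (B - n + ε) := by
  interval_cases ε
  · simpa using sum_alternating_gchoose n A B
  · cases n with
    | zero => simp
    | succ n =>
      rw [Finset.sum_range_succ']
      have h := sum_alternating_gchoose n (A - 1) B
      rw [show A - ((n + 1 : ℕ) : ℤ) = A - 1 - n by push_cast; ring,
        show B - ((n + 1 : ℕ) : ℤ) + ((1 : ℕ) : ℤ) = B - n by push_cast; ring, ← h,
        Finset.mul_sum]
      simp only [Nat.cast_zero, pow_one, mul_zero, add_zero]
      refine Finset.sum_congr rfl fun k _ => ?_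
      have hc : ((n : ℚ) + 1) * (n.choose k : ℚ) = ((n + 1).choose (k + 1) : ℚ) * (k + 1) := by
        exact_mod_cast Nat.add_one_mul_choose_eq n k
      rw [show A - ((k + 1 : ℕ) : ℤ) = A - 1 - k by push_cast; ring]
      push_cast
      linear_combination (-1) * (-(-1 : ℚ) ^ k * gchoose (A - 1 - k) B) * hc

lemma sum_neg_one_two_choose (n : ℕ) :
    ∑ k ∈ Finset.range (n + 1), (-1 : ℚ) ^ k * 2 ^ (n - k) * (n.choose k : ℚ) = 1 := by
  rw [← add_pow]
  norm_num

lemma sum_neg_one_choose (n : ℕ) :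
    ∑ k ∈ Finset.range (n + 1), (-1 : ℚ) ^ k * (n.choose k : ℚ) = 0 ^ n := by
  have h := add_pow (-1 : ℚ) 1 n
  simpa using h.symm

/-- The sums over `η₁`, `η₂`, `η₃`, where `m = τ₁ - α₁`, `p = ω - α₃` and `F` collects the factors
that do not depend on the `ηᵢ`. -/
lemma eta_sum (m n p : ℕ) (F : ℚ) :
    ∑ x ∈ Finset.range (m + 1), ∑ y ∈ Finset.range (n + 1), ∑ z ∈ Finset.range (p + 1),
      F * ((-1 : ℚ) ^ x * 2 ^ (m - x) * (m.choose x : ℚ)) *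
        ((-1 : ℚ) ^ y * 2 ^ (n - y) * (n.choose y : ℚ)) * ((-1 : ℚ) ^ z * (p.choose z : ℚ)) =
      F * 0 ^ p := by
  simp only [← Finset.mul_sum, ← Finset.sum_mul, sum_neg_one_two_choose, sum_neg_one_choose,
    mul_one]

/-- Only the term `k = n` survives the factor `0 ^ (n - k)`. -/
lemma alpha_three_sum (n : ℕ) (f : ℕ → ℚ) :
    ∑ k ∈ Finset.range (n + 1), f k * 0 ^ (n - k) = f n := by
  rw [Finset.sum_range_succ, Finset.sum_eq_zero, zero_add]
  · simp
  · intro k hk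
    rw [Finset.mem_range] at hk
    simp [show n - k ≠ 0 by omega]

/-- The key technical identity (Lemma "wildLem"): the sum over
`ω ∈ [0,τ₃]`, `α₁ ∈ [0,τ₁]`, `α₃ ∈ [0,ω]`, `η₁ ∈ [0,τ₁−α₁]`, `η₂ ∈ [0,τ₂]`,
`η₃ ∈ [0,ω−α₃]` equals `(−1)^{φ+ε} τ₁^ε C(κ−τ₁−τ₂−c, φ−κ+τ₂+τ₃+d+ε)`. -/
theorem statement18 (κ φ τ₁ τ₂ τ₃ c d : ℕ) (ε : ℕ) (hε : ε ≤ 1) :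
    (∑ ω ∈ Finset.range (τ₃ + 1), ∑ α₁ ∈ Finset.range (τ₁ + 1),
      ∑ α₃ ∈ Finset.range (ω + 1), ∑ η₁ ∈ Finset.range (τ₁ - α₁ + 1),
      ∑ η₂ ∈ Finset.range (τ₂ + 1), ∑ η₃ ∈ Finset.range (ω - α₃ + 1),
        (-1 : ℚ) ^ (φ + α₁ + α₃ + ω + η₁ + η₂ + η₃) *
          (2 : ℚ) ^ (τ₁ + τ₂ - α₁ - η₁ - η₂) *
          gchoose ((κ : ℤ) - α₁ - τ₂ - τ₃ + ω - α₃ - c)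
            ((φ : ℤ) - κ + τ₁ + τ₂ + ω + d) *
          (τ₃.choose ω : ℚ) * (τ₁.choose α₁ : ℚ) * (ω.choose α₃ : ℚ) *
          ((τ₁ - α₁).choose η₁ : ℚ) * (τ₂.choose η₂ : ℚ) * ((ω - α₃).choose η₃ : ℚ) *
          (((α₁ : ℚ) - ω + α₃) ^ ε)) =
      (-1 : ℚ) ^ (φ + ε) * (τ₁ : ℚ) ^ ε *
        gchoose ((κ : ℤ) - τ₁ - τ₂ - c) ((φ : ℤ) - κ + τ₂ + τ₃ + d + ε) := by
  have step : ∀ ω ∈ Finset.range (τ₃ + 1), ∀ α₁ ∈ Finset.range (τ₁ + 1),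
      (∑ α₃ ∈ Finset.range (ω + 1), ∑ η₁ ∈ Finset.range (τ₁ - α₁ + 1),
      ∑ η₂ ∈ Finset.range (τ₂ + 1), ∑ η₃ ∈ Finset.range (ω - α₃ + 1),
        (-1 : ℚ) ^ (φ + α₁ + α₃ + ω + η₁ + η₂ + η₃) *
          (2 : ℚ) ^ (τ₁ + τ₂ - α₁ - η₁ - η₂) *
          gchoose ((κ : ℤ) - α₁ - τ₂ - τ₃ + ω - α₃ - c)
            ((φ : ℤ) - κ + τ₁ + τ₂ + ω + d) *
          (τ₃.choose ω : ℚ) * (τ₁.choose α₁ : ℚ) * (ω.choose α₃ : ℚ) *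
          ((τ₁ - α₁).choose η₁ : ℚ) * (τ₂.choose η₂ : ℚ) * ((ω - α₃).choose η₃ : ℚ) *
          (((α₁ : ℚ) - ω + α₃) ^ ε)) =
      (-1 : ℚ) ^ φ * ((τ₁.choose α₁ : ℚ) * (-1) ^ α₁ * (α₁ : ℚ) ^ ε) *
        ((τ₃.choose ω : ℚ) * gchoose ((κ : ℤ) - τ₂ - τ₃ - c - α₁)
          ((φ : ℤ) - κ + τ₁ + τ₂ + d + ω)) := by
    intro ω _ α₁ hα
    rw [Finset.mem_range] at hα
    let F : ℕ → ℚ := fun α₃ => (-1 : ℚ) ^ (φ + α₁ + α₃ + ω) *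
      gchoose ((κ : ℤ) - α₁ - τ₂ - τ₃ + ω - α₃ - c) ((φ : ℤ) - κ + τ₁ + τ₂ + ω + d) *
      (τ₃.choose ω : ℚ) * (τ₁.choose α₁ : ℚ) * (ω.choose α₃ : ℚ) * (((α₁ : ℚ) - ω + α₃) ^ ε)
    trans ∑ α₃ ∈ Finset.range (ω + 1), F α₃ * 0 ^ (ω - α₃)
    · refine Finset.sum_congr rfl fun α₃ _ => ?_
      rw [← eta_sum (τ₁ - α₁) τ₂ (ω - α₃) (F α₃)]
      refine Finset.sum_congr rfl fun η₁ h₁ => Finset.sum_congr rfl fun η₂ h₂ =>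
        Finset.sum_congr rfl fun η₃ _ => ?_
      rw [Finset.mem_range] at h₁ h₂
      rw [show τ₁ + τ₂ - α₁ - η₁ - η₂ = (τ₁ - α₁ - η₁) + (τ₂ - η₂) by omega]
      simp only [F, pow_add]
      ring
    · rw [alpha_three_sum]
      simp only [F]
      rw [show (κ : ℤ) - α₁ - τ₂ - τ₃ + ω - ω - c = (κ : ℤ) - τ₂ - τ₃ - c - α₁ by ring,
        show (φ : ℤ) - κ + τ₁ + τ₂ + ω + d = (φ : ℤ) - κ + τ₁ + τ₂ + d + ω by ring,
        show (α₁ : ℚ) - ω + ω = α₁ by ring, Nat.choose_self,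
        show φ + α₁ + ω + ω = φ + α₁ + 2 * ω by ring, pow_add, pow_add, pow_mul]
      norm_num
      ring
  rw [Finset.sum_congr rfl fun ω hω => Finset.sum_congr rfl (step ω hω), Finset.sum_comm]
  simp only [← Finset.mul_sum, sum_choose_mul_gchoose]
  have h := sum_alternating_gchoose_weighted τ₁ ε hε ((κ : ℤ) - τ₂ - c)
    ((φ : ℤ) - κ + τ₁ + τ₂ + d + τ₃)
  rw [show (κ : ℤ) - τ₁ - τ₂ - c = (κ : ℤ) - τ₂ - c - τ₁ by ring,
    show (φ : ℤ) - κ + τ₂ + τ₃ + d + ε = (φ : ℤ) - κ + τ₁ + τ₂ + d + τ₃ - τ₁ + ε by ring,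
    pow_add, mul_assoc, mul_assoc, ← mul_assoc ((-1 : ℚ) ^ ε), ← h, Finset.mul_sum]
  refine Finset.sum_congr rfl fun α₁ _ => ?_
  rw [show (κ : ℤ) - τ₂ - τ₃ - c - α₁ + τ₃ = (κ : ℤ) - τ₂ - c - α₁ by ring]
  ring
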